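/- For every positive integer k and every k-glue function g, there exists a set of k dipole words, each of length 9k+42, that attractively encodes g. -/

import Mathlib

/-- The alphabet Σ = {0, 1, ⋄} of dipole letters. -/
inductive Dip : Type
  | zero : Dip
  | one : Dip
  | blank : Dip
  deriving DecidableEq

open Dip

/-- The force between a pair of letters: 1 if {x,y} = {0,1}, -1 if x = y ∈ {0,1}, 0 otherwise. -/
def lf : Dip → Dip → ℤ
  | zero, one => 1
  | one, zero => 1
  | zero, zero => -1
  | one, one => -1
  | _, _ => 0

/-- The force between a pair of equal-length words: the sum of letterwise forces. -/
def force (X Y : List Dip) : ℤ := (List.zipWith lf X Y).sum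

/-- The length-`i` suffix of a word. -/
def sufx (X : List Dip) (i : ℕ) : List Dip := X.drop (X.length - i)

/-- A pair of equal-length words `X`, `Y` is aligned provided `f(X,Y) ≤ 0` and all proper
prefix/suffix overlaps with `Y` and its reverse have non-positive force. -/
def aligned (X Y : List Dip) : Prop :=
  force X Y ≤ 0 ∧
    ∀ A ∈ [Y, Y.reverse], ∀ i, 1 ≤ i → i ≤ X.length - 1 →
      force (X.take i) (sufx A i) ≤ 0 ∧ force (sufx X i) (A.take i) ≤ 0

/-- The words `W 1, …, W k` attractively encode the `k`-glue function `g`: every pair is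
aligned and `f(Wᵢ, Rev(Wⱼ)) > 0` iff `g i j > 0`. -/
def attEncodes (k : ℕ) (W : ℕ → List Dip) (g : ℕ → ℕ → ℤ) : Prop :=
  (∀ i ∈ Finset.Icc 1 k, ∀ j ∈ Finset.Icc 1 k, aligned (W i) (W j)) ∧
    ∀ i ∈ Finset.Icc 1 k, ∀ j ∈ Finset.Icc 1 k,
      (0 < force (W i) ((W j).reverse) ↔ 0 < g i j)

/-- The charge of a letter; the force of two letters is minus the product of their charges. -/
def charge : Dip → ℤ
  | zero => 1
  | one => -1
  | blank => 0

lemma lf_eq (x y : Dip) : lf x y = -(charge x * charge y) := by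
  cases x <;> cases y <;> rfl

lemma force_comm (X Y : List Dip) : force X Y = force Y X := by
  unfold force
  rw [List.zipWith_comm]
  congr 2
  funext x y
  rw [lf_eq, lf_eq, mul_comm]

lemma force_eq_sum : ∀ (X Y : List Dip), X.length = Y.length →
    force X Y =
      -∑ p ∈ Finset.range X.length, charge (X.getD p blank) * charge (Y.getD p blank)
  | [], Y, _ => by simp [force]
  | x :: X, [], h => by simp at h
  | x :: X, y :: Y, h => by
    have ih := force_eq_sum X Y (by simpa using h)
    rw [List.length_cons, Finset.sum_range_succ']
    simp only [force, List.zipWith_cons_cons, List.sum_cons, List.getD_cons_succ,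
      List.getD_cons_zero, lf_eq x y] at ih ⊢
    rw [ih]
    ring

open Polynomial

/-- The generating polynomial of the charges of a word. -/
noncomputable def gen (L : List Dip) : ℤ[X] :=
  ∑ p ∈ Finset.range L.length, C (charge (L.getD p blank)) * X ^ p

lemma coeff_gen (L : List Dip) (p : ℕ) : (gen L).coeff p = charge (L.getD p blank) := by
  simp only [gen, finsetSum_coeff, coeff_C_mul, coeff_X_pow, mul_ite, mul_one, mul_zero,
    Finset.sum_ite_eq, Finset.mem_range]
  split_ifs with h
  · rfl
  · rw [List.getD_eq_default _ _ (by omega)]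
    rfl

lemma coeff_X_mul_eq_ite (p : ℤ[X]) (n : ℕ) :
    (X * p).coeff n = if 1 ≤ n then p.coeff (n - 1) else 0 := by
  simpa using coeff_X_pow_mul' p 1 n

/-- Overlap forces are, up to sign, coefficients of products of generating polynomials. -/
lemma force_take_sufx (L A : List Dip) (h : L.length = A.length) (i : ℕ)
    (hi : i + 1 ≤ L.length) :
    force (L.take (i + 1)) (sufx A (i + 1)) = -(gen L * gen A.reverse).coeff i := by
  have h1 : (L.take (i + 1)).length = i + 1 := by simp; omega
  rw [force_eq_sum _ _ (by simp [sufx]; omega), h1, coeff_mul,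
    Finset.Nat.sum_antidiagonal_eq_sum_range_succ_mk]
  congr 1
  refine Finset.sum_congr rfl fun p hp => ?_
  rw [Finset.mem_range] at hp
  rw [coeff_gen, coeff_gen]
  have h2 : (L.take (i + 1)).getD p blank = L.getD p blank := by
    simp [List.getD_eq_getElem?_getD, hp]
  have h3 : (sufx A (i + 1)).getD p blank = A.reverse.getD (i - p) blank := by
    simp only [sufx, List.getD_eq_getElem?_getD, List.getElem?_drop]
    rw [List.getElem?_reverse (by omega)]
    congr 2
    omega
  rw [h2, h3]

lemma force_eq_coeff (L A : List Dip) (h : L.length = A.length) (i : ℕ)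
    (hi : L.length = i + 1) : force L A = -(gen L * gen A.reverse).coeff i := by
  rw [← force_take_sufx L A h i hi.ge, ← hi, List.take_length, h, sufx, Nat.sub_self,
    List.drop_zero]

/-- A polynomial all of whose coefficients are nonnegative. -/
def CoeffNonneg (p : ℤ[X]) : Prop := ∀ n, 0 ≤ p.coeff n

lemma CoeffNonneg.add {p q : ℤ[X]} (hp : CoeffNonneg p) (hq : CoeffNonneg q) :
    CoeffNonneg (p + q) := fun n => by
  rw [coeff_add]
  exact add_nonneg (hp n) (hq n)

lemma CoeffNonneg.mul {p q : ℤ[X]} (hp : CoeffNonneg p) (hq : CoeffNonneg q) :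
    CoeffNonneg (p * q) := fun n => by
  rw [coeff_mul]
  exact Finset.sum_nonneg fun _ _ => mul_nonneg (hp _) (hq _)

lemma CoeffNonneg.X_pow (n : ℕ) : CoeffNonneg (X ^ n) := fun m => by
  rw [coeff_X_pow]
  split_ifs <;> simp

lemma coeffNonneg_X : CoeffNonneg X := by
  simpa using CoeffNonneg.X_pow 1

lemma CoeffNonneg.one : CoeffNonneg 1 := by
  simpa using CoeffNonneg.X_pow 0

lemma CoeffNonneg.two : CoeffNonneg 2 := by
  rw [← one_add_one_eq_two]
  exact CoeffNonneg.one.add CoeffNonneg.one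

lemma CoeffNonneg.seven : CoeffNonneg 7 := by
  rw [show (7 : ℤ[X]) = 2 * 2 + 2 + 1 by norm_num]
  exact ((CoeffNonneg.two.mul CoeffNonneg.two).add CoeffNonneg.two).add CoeffNonneg.one

lemma CoeffNonneg.sum_X_pow (s : Finset ℕ) (f : ℕ → ℕ) :
    CoeffNonneg (∑ q ∈ s, X ^ f q) := fun n => by
  rw [finsetSum_coeff]
  exact Finset.sum_nonneg fun q _ => CoeffNonneg.X_pow _ n

/-- Starting positions of the pairs `00` in the `i`-th word of length `n`. Two words `i`, `j`
have mirror-image pairs exactly when `g i j ≤ 0` or `g j i ≤ 0`. -/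
def pairStarts (k n : ℕ) (g : ℕ → ℕ → ℤ) (i : ℕ) : Finset ℕ :=
  {2, 7, 9, n - 2} ∪ ({9 + 2 * i} ∪
    ((Finset.Icc 1 k).filter (fun l => g i l ≤ 0)).image (fun l => n - 11 - 2 * l))

lemma mem_pairStarts {k n : ℕ} {g : ℕ → ℕ → ℤ} {i a : ℕ} :
    a ∈ pairStarts k n g i ↔ a = 2 ∨ a = 7 ∨ a = 9 ∨ a = n - 2 ∨ a = 9 + 2 * i ∨
      ∃ l, 1 ≤ l ∧ l ≤ k ∧ g i l ≤ 0 ∧ a = n - 11 - 2 * l := by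
  simp only [pairStarts, Finset.mem_union, Finset.mem_insert, Finset.mem_singleton,
    Finset.mem_image, Finset.mem_filter, Finset.mem_Icc]
  constructor
  · rintro ((h | h | h | h) | h | ⟨l, ⟨⟨h1, h2⟩, h3⟩, h4⟩)
    · simp [h]
    · simp [h]
    · simp [h]
    · simp [h]
    · simp [h]
    · exact Or.inr (Or.inr (Or.inr (Or.inr (Or.inr ⟨l, h1, h2, h3, h4.symm⟩))))
  · rintro (h | h | h | h | h | ⟨l, h1, h2, h3, h4⟩)
    · simp [h]
    · simp [h]
    · simp [h]
    · simp [h]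
    · simp [h]
    · exact Or.inr (Or.inr ⟨l, ⟨⟨h1, h2⟩, h3⟩, h4.symm⟩)

/-- The letter at position `p` of the `i`-th word: a single `1` at position `5`, facing a `0` at
its mirror position `n - 6` and flanked by `0`s, and pairs `00` elsewhere. -/
def letter (k n : ℕ) (g : ℕ → ℕ → ℤ) (i p : ℕ) : Dip :=
  if p = 5 then one
  else if p = 4 ∨ p = 6 ∨ p = n - 6 ∨ p ∈ pairStarts k n g i ∨
    (1 ≤ p ∧ p - 1 ∈ pairStarts k n g i) then zero
  else blank

/-- The `i`-th word of length `n`. -/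
def word (k n : ℕ) (g : ℕ → ℕ → ℤ) (i : ℕ) : List Dip :=
  (List.range n).map (letter k n g i)

lemma length_word (k n : ℕ) (g : ℕ → ℕ → ℤ) (i : ℕ) : (word k n g i).length = n := by
  simp [word]

lemma word_getD {k n : ℕ} (g : ℕ → ℕ → ℤ) (i : ℕ) {p : ℕ} (hp : p < n) :
    (word k n g i).getD p blank = letter k n g i p := by
  simp [word, List.getD_eq_getElem?_getD, hp]

lemma word_reverse_getD {k n : ℕ} (g : ℕ → ℕ → ℤ) (i : ℕ) {p : ℕ} (hp : p < n) :
    (word k n g i).reverse.getD p blank = letter k n g i (n - 1 - p) := by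
  rw [List.getD_eq_getElem?_getD, List.getElem?_reverse (by simpa [length_word] using hp),
    length_word, ← List.getD_eq_getElem?_getD, word_getD g i (by omega)]

lemma charge_letter {k n : ℕ} (g : ℕ → ℕ → ℤ) {i : ℕ} (hn : 4 * k + 22 ≤ n) (hi : 1 ≤ i)
    (hik : i ≤ k) (p : ℕ) :
    charge (letter k n g i p) =
      (if p = 4 then 1 else 0) - (if p = 5 then 1 else 0) + (if p = 6 then 1 else 0)
        + (if p = n - 6 then 1 else 0) + (if p ∈ pairStarts k n g i then 1 else 0)
        + (if 1 ≤ p ∧ p - 1 ∈ pairStarts k n g i then 1 else 0) := by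
  have key : ∀ a ∈ pairStarts k n g i, a ≠ 3 ∧ a ≠ 4 ∧ a ≠ 5 ∧ a ≠ 6 ∧ a ≠ n - 6 ∧
      a + 1 ≠ n - 6 ∧ a + 1 ∉ pairStarts k n g i := by
    intro a ha
    have h2 := fun h => (mem_pairStarts (k := k) (n := n) (g := g) (i := i) (a := a + 1)).1 h
    rw [mem_pairStarts] at ha
    refine ⟨?_, ?_, ?_, ?_, ?_, ?_, fun h => ?_⟩
    iterate 6 rcases ha with h | h | h | h | h | ⟨l, h1, h2, h3, h⟩ <;> omega
    rcases h2 h with h | h | h | h | h | ⟨l, h1, h2, h3, h⟩ <;>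
    rcases ha with h' | h' | h' | h' | h' | ⟨l', h1', h2', h3', h'⟩ <;> omega
  have k1 := key p
  have k2 : 1 ≤ p ∧ p - 1 ∈ pairStarts k n g i → p ≠ 4 ∧ p ≠ 5 ∧ p ≠ 6 ∧ p ≠ n - 6 ∧
      p ∉ pairStarts k n g i := by
    rintro ⟨h1, h⟩
    have := key _ h
    rw [Nat.sub_add_cancel h1] at this
    exact ⟨by omega, by omega, by omega, this.2.2.2.2.2.1, this.2.2.2.2.2.2⟩
  unfold letter
  by_cases hP : p ∈ pairStarts k n g i <;>
    by_cases hQ : 1 ≤ p ∧ p - 1 ∈ pairStarts k n g i <;>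
    simp only [hP, hQ, if_true, if_false] <;> split_ifs <;> simp [charge] <;> grind

lemma pairStarts_lt {k n : ℕ} {g : ℕ → ℕ → ℤ} {i a : ℕ} (hn : 4 * k + 22 ≤ n)
    (hik : i ≤ k) (ha : a ∈ pairStarts k n g i) : a + 1 < n := by
  rw [mem_pairStarts] at ha
  rcases ha with h | h | h | h | h | ⟨l, h1, h2, h3, h⟩ <;> omega

lemma letter_eq_blank {k n : ℕ} {g : ℕ → ℕ → ℤ} {i p : ℕ} (hn : 4 * k + 22 ≤ n)
    (hik : i ≤ k) (hp : n ≤ p) : letter k n g i p = blank := by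
  unfold letter
  rw [if_neg (by omega), if_neg]
  rintro (h | h | h | h | ⟨h1, h⟩)
  · omega
  · omega
  · omega
  · have := pairStarts_lt hn hik h
    omega
  · have := pairStarts_lt hn hik h
    omega

lemma gen_word {k n : ℕ} (g : ℕ → ℕ → ℤ) {i : ℕ} (hn : 4 * k + 22 ≤ n) (hi : 1 ≤ i)
    (hik : i ≤ k) :
    gen (word k n g i) = X ^ 4 - X ^ 5 + X ^ 6 + X ^ (n - 6)
      + (1 + X) * ∑ q ∈ pairStarts k n g i, X ^ q := by
  ext p
  have h1 : (gen (word k n g i)).coeff p = charge (letter k n g i p) := by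
    rw [coeff_gen]
    rcases lt_or_ge p n with hp | hp
    · rw [word_getD g i hp]
    · rw [letter_eq_blank hn hik hp, List.getD_eq_default _ _ (by rwa [length_word])]
  rw [h1, charge_letter g hn hi hik, add_mul, one_mul]
  simp only [coeff_add, coeff_sub, coeff_X_pow, finsetSum_coeff, coeff_X_mul_eq_ite,
    Finset.sum_ite_eq, ite_and, add_assoc]

lemma gen_word_reverse {k n : ℕ} (g : ℕ → ℕ → ℤ) {i : ℕ} (hn : 4 * k + 22 ≤ n)
    (hi : 1 ≤ i) (hik : i ≤ k) :
    gen (word k n g i).reverse = X ^ (n - 5) - X ^ (n - 6) + X ^ (n - 7) + X ^ 5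
      + (1 + X) * ∑ q ∈ pairStarts k n g i, X ^ (n - 2 - q) := by
  ext p
  have hlt : ∀ a ∈ pairStarts k n g i, a + 1 < n := fun a => pairStarts_lt hn hik
  have hsum : ∀ r, (∑ q ∈ pairStarts k n g i, if r = n - 2 - q then (1 : ℤ) else 0)
      = if r + 2 ≤ n ∧ n - 2 - r ∈ pairStarts k n g i then 1 else 0 := by
    intro r
    by_cases hr : r + 2 ≤ n
    · have : ∀ q ∈ pairStarts k n g i, (if r = n - 2 - q then (1 : ℤ) else 0)
          = if n - 2 - r = q then 1 else 0 := by
        intro q hq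
        have := hlt q hq
        congr 1
        apply propext
        omega
      rw [Finset.sum_congr rfl this, Finset.sum_ite_eq]
      simp [hr]
    · rw [Finset.sum_eq_zero, if_neg (by tauto)]
      intro q hq
      rw [if_neg (by omega)]
  rw [add_mul, one_mul]
  simp only [coeff_add, coeff_sub, coeff_X_pow, finsetSum_coeff, coeff_X_mul_eq_ite, hsum]
  rw [coeff_gen]
  rcases lt_or_ge p n with hp | hp
  · rw [word_reverse_getD g i hp, charge_letter g hn hi hik]
    have e1 : (n - 1 - p = 4) = (p = n - 5) := propext (by omega)
    have e2 : (n - 1 - p = 5) = (p = n - 6) := propext (by omega)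
    have e3 : (n - 1 - p = 6) = (p = n - 7) := propext (by omega)
    have e4 : (n - 1 - p = n - 6) = (p = 5) := propext (by omega)
    have e5 : (1 ≤ n - 1 - p ∧ n - 1 - p - 1 ∈ pairStarts k n g i)
        = (p + 2 ≤ n ∧ n - 2 - p ∈ pairStarts k n g i) := by
      rw [show n - 1 - p - 1 = n - 2 - p by omega]
      congr 1
      exact propext (by omega)
    have e6 : (if n - 1 - p ∈ pairStarts k n g i then (1 : ℤ) else 0)
        = if 1 ≤ p then
            if p - 1 + 2 ≤ n ∧ n - 2 - (p - 1) ∈ pairStarts k n g i then 1 else 0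
          else 0 := by
      by_cases h : 1 ≤ p
      · rw [if_pos h, show n - 2 - (p - 1) = n - 1 - p by omega]
        simp [show p - 1 + 2 ≤ n by omega]
      · rw [if_neg h, if_neg]
        intro h'
        have := hlt _ h'
        omega
    simp only [e1, e2, e3, e4, e5, e6]
    ring
  · rw [List.getD_eq_default _ _ (by simpa [length_word] using hp)]
    rw [if_neg (by omega), if_neg (by omega), if_neg (by omega), if_neg (by omega),
      if_neg (by omega), if_pos (by omega), if_neg (by omega)]
    rfl

/-- The pairs common to all words can be split off the sum over all pairs. -/
lemma exists_sum_pairStarts {k n : ℕ} (g : ℕ → ℕ → ℤ) (i : ℕ) (hn : 12 ≤ n) (f : ℕ → ℕ) :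
    ∃ s : ℤ[X], CoeffNonneg s ∧ ∑ q ∈ pairStarts k n g i, (X : ℤ[X]) ^ f q =
      X ^ f 2 + X ^ f 7 + X ^ f 9 + X ^ f (n - 2) + s := by
  have hsub : ({2, 7, 9, n - 2} : Finset ℕ) ⊆ pairStarts k n g i :=
    Finset.subset_union_left
  refine ⟨_, CoeffNonneg.sum_X_pow (pairStarts k n g i \ {2, 7, 9, n - 2}) f, ?_⟩
  rw [← Finset.sum_sdiff hsub, add_comm]
  congr 1
  rw [Finset.sum_insert, Finset.sum_insert, Finset.sum_insert, Finset.sum_singleton]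
  · ring
  all_goals
    simp only [Finset.mem_insert, Finset.mem_singleton]
    omega

lemma coeffNonneg_expansion_mul_expansion_reverse {s t : ℤ[X]} (hs : CoeffNonneg s) (ht : CoeffNonneg t)
    (m : ℕ) :
    CoeffNonneg ((X ^ 4 - X ^ 5 + X ^ 6 + X ^ (m + 5)
        + (1 + X) * (X ^ 2 + X ^ 7 + X ^ 9 + X ^ (m + 9) + s))
      * (X ^ (m + 6) - X ^ (m + 5) + X ^ (m + 4) + X ^ 5
        + (1 + X) * (X ^ (m + 7) + X ^ (m + 2) + X ^ m + X ^ 0 + t))) := by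
  have e : (X ^ 4 - X ^ 5 + X ^ 6 + X ^ (m + 5)
        + (1 + X) * (X ^ 2 + X ^ 7 + X ^ 9 + X ^ (m + 9) + s))
      * (X ^ (m + 6) - X ^ (m + 5) + X ^ (m + 4) + X ^ 5
        + (1 + X) * (X ^ (m + 7) + X ^ (m + 2) + X ^ m + X ^ 0 + t)) =
      X ^ 8 * X ^ m * (1 + 7 * X ^ 2 + X ^ 4)
      + X ^ 9 * (1 + X ^ m * X ^ m) * (2 + X + 2 * X ^ 2) + X ^ 10 * X ^ m
      + (X ^ 4 + X ^ 7 + (1 + X) * X ^ 5 * X ^ m) * ((X ^ 7 * X ^ m + X ^ 2 * X ^ m + X ^ m + 1) + t)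
      + (X ^ m * X ^ 4 + X ^ m * X ^ 7 + (1 + X) * X ^ 5) * ((X ^ 2 + X ^ 7 + X ^ 9 + X ^ 9 * X ^ m) + s)
      + (1 + X) * (1 + X) * (X ^ 2 * (X ^ 2 * X ^ m + X ^ m + 1)
        + X ^ 7 * (X ^ 7 * X ^ m + X ^ m + 1)
        + X ^ 9 * (X ^ 7 * X ^ m + X ^ 2 * X ^ m + X ^ m)
        + X ^ 9 * X ^ m * (X ^ 7 * X ^ m + X ^ 2 * X ^ m + 1)
        + (X ^ 2 + X ^ 7 + X ^ 9 + X ^ 9 * X ^ m) * t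
        + s * (X ^ 7 * X ^ m + X ^ 2 * X ^ m + X ^ m + 1) + s * t) := by
    ring
  rw [e]
  repeat' with_reducible first
    | assumption
    | exact CoeffNonneg.X_pow _
    | exact coeffNonneg_X
    | exact CoeffNonneg.one
    | exact CoeffNonneg.two
    | exact CoeffNonneg.seven
    | refine CoeffNonneg.add ?_ ?_
    | refine CoeffNonneg.mul ?_ ?_

/-- Overlaps of a word with another, unreversed, word are never attractive. -/
lemma coeffNonneg_gen_mul_gen_reverse {k n : ℕ} (g : ℕ → ℕ → ℤ) {i j : ℕ}
    (hn : 4 * k + 22 ≤ n) (hi : 1 ≤ i) (hik : i ≤ k) (hj : 1 ≤ j) (hjk : j ≤ k) :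
    CoeffNonneg (gen (word k n g i) * gen (word k n g j).reverse) := by
  obtain ⟨s, hs, hs'⟩ :=
    exists_sum_pairStarts (k := k) g i (by omega : 12 ≤ n) (fun q => q)
  obtain ⟨t, ht, ht'⟩ :=
    exists_sum_pairStarts (k := k) g j (by omega : 12 ≤ n) (fun q => n - 2 - q)
  obtain ⟨m, rfl⟩ : ∃ m, n = m + 11 := ⟨n - 11, by omega⟩
  rw [gen_word g hn hi hik, gen_word_reverse g hn hj hjk, hs', ht']
  rw [show m + 11 - 5 = m + 6 by omega, show m + 11 - 6 = m + 5 by omega,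
    show m + 11 - 7 = m + 4 by omega, show m + 11 - 2 - 2 = m + 7 by omega,
    show m + 11 - 2 - 7 = m + 2 by omega, show m + 11 - 2 - 9 = m by omega,
    show m + 11 - 2 - (m + 11 - 2) = 0 by omega,
    show m + 11 - 2 = m + 9 by omega]
  exact coeffNonneg_expansion_mul_expansion_reverse hs ht m

lemma coeffNonneg_expansion_mul_expansion {s t : ℤ[X]} (hs : CoeffNonneg s) (ht : CoeffNonneg t)
    (m : ℕ) :
    CoeffNonneg ((X ^ 4 - X ^ 5 + X ^ 6 + X ^ (m + 5)
        + (1 + X) * (X ^ 2 + X ^ 7 + X ^ 9 + X ^ (m + 9) + s))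
      * (X ^ 4 - X ^ 5 + X ^ 6 + X ^ (m + 5)
        + (1 + X) * (X ^ 2 + X ^ 7 + X ^ 9 + X ^ (m + 9) + t))
      + 2 * X ^ (m + 10)) := by
  have e : (X ^ 4 - X ^ 5 + X ^ 6 + X ^ (m + 5)
        + (1 + X) * (X ^ 2 + X ^ 7 + X ^ 9 + X ^ (m + 9) + s))
      * (X ^ 4 - X ^ 5 + X ^ 6 + X ^ (m + 5)
        + (1 + X) * (X ^ 2 + X ^ 7 + X ^ 9 + X ^ (m + 9) + t))
      + 2 * X ^ (m + 10) =
      X ^ 8 * (1 + 7 * X ^ 2 + X ^ 4) + 2 * X ^ 9 * X ^ m * (1 + X ^ 2)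
      + X ^ 10 * X ^ m * X ^ m
      + (X ^ 4 + X ^ 7 + (1 + X) * X ^ 5 * X ^ m)
        * ((X ^ 2 + X ^ 7 + X ^ 9 + X ^ 9 * X ^ m) + s + ((X ^ 2 + X ^ 7 + X ^ 9 + X ^ 9 * X ^ m) + t))
      + (1 + X) * (1 + X) * (X ^ 4 + X ^ 14 + X ^ 18 + X ^ 18 * X ^ m * X ^ m
        + 2 * X ^ 2 * (X ^ 9 + X ^ 9 * X ^ m) + 2 * X ^ 7 * (X ^ 9 + X ^ 9 * X ^ m)
        + 2 * X ^ 18 * X ^ m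
        + (X ^ 2 + X ^ 7 + X ^ 9 + X ^ 9 * X ^ m) * (s + t) + s * t) := by
    ring
  rw [e]
  repeat' with_reducible first
    | assumption
    | exact CoeffNonneg.X_pow _
    | exact coeffNonneg_X
    | exact CoeffNonneg.one
    | exact CoeffNonneg.two
    | exact CoeffNonneg.seven
    | refine CoeffNonneg.add ?_ ?_
    | refine CoeffNonneg.mul ?_ ?_

/-- Overlaps of a word with a reversed word are attractive at most in the centered position. -/
lemma coeffNonneg_gen_mul_gen {k n : ℕ} (g : ℕ → ℕ → ℤ) {i j : ℕ}
    (hn : 4 * k + 22 ≤ n) (hi : 1 ≤ i) (hik : i ≤ k) (hj : 1 ≤ j) (hjk : j ≤ k) :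
    CoeffNonneg (gen (word k n g i) * gen (word k n g j) + 2 * X ^ (n - 1)) := by
  obtain ⟨s, hs, hs'⟩ :=
    exists_sum_pairStarts (k := k) g i (by omega : 12 ≤ n) (fun q => q)
  obtain ⟨t, ht, ht'⟩ :=
    exists_sum_pairStarts (k := k) g j (by omega : 12 ≤ n) (fun q => q)
  obtain ⟨m, rfl⟩ : ∃ m, n = m + 11 := ⟨n - 11, by omega⟩
  rw [gen_word g hn hi hik, gen_word g hn hj hjk, hs', ht']
  rw [show m + 11 - 1 = m + 10 by omega, show m + 11 - 6 = m + 5 by omega, show m + 11 - 2 = m + 9 by omega]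
  exact coeffNonneg_expansion_mul_expansion hs ht m

lemma coeffNonneg_expansion_reverse_mul_expansion_reverse {s t : ℤ[X]} (hs : CoeffNonneg s) (ht : CoeffNonneg t)
    (m : ℕ) :
    CoeffNonneg ((X ^ (m + 6) - X ^ (m + 5) + X ^ (m + 4) + X ^ 5
        + (1 + X) * (X ^ (m + 7) + X ^ (m + 2) + X ^ m + X ^ 0 + s))
      * (X ^ (m + 6) - X ^ (m + 5) + X ^ (m + 4) + X ^ 5
        + (1 + X) * (X ^ (m + 7) + X ^ (m + 2) + X ^ m + X ^ 0 + t))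
      + 2 * X ^ (m + 10)) := by
  have e : (X ^ (m + 6) - X ^ (m + 5) + X ^ (m + 4) + X ^ 5
        + (1 + X) * (X ^ (m + 7) + X ^ (m + 2) + X ^ m + X ^ 0 + s))
      * (X ^ (m + 6) - X ^ (m + 5) + X ^ (m + 4) + X ^ 5
        + (1 + X) * (X ^ (m + 7) + X ^ (m + 2) + X ^ m + X ^ 0 + t))
      + 2 * X ^ (m + 10) =
      X ^ m * X ^ m * X ^ 8 * (1 + 7 * X ^ 2 + X ^ 4)
      + 2 * X ^ 9 * X ^ m * (1 + X ^ 2) + X ^ 10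
      + (X ^ m * X ^ 4 + X ^ m * X ^ 7 + (1 + X) * X ^ 5)
        * ((X ^ 7 * X ^ m + X ^ 2 * X ^ m + X ^ m + 1) + s + ((X ^ 7 * X ^ m + X ^ 2 * X ^ m + X ^ m + 1) + t))
      + (1 + X) * (1 + X) * (X ^ 14 * X ^ m * X ^ m + X ^ 4 * X ^ m * X ^ m
        + X ^ m * X ^ m + 1 + 2 * X ^ 7 * X ^ m * (X ^ m + 1)
        + 2 * X ^ 2 * X ^ m * (X ^ m + 1) + 2 * X ^ m
        + (X ^ 7 * X ^ m + X ^ 2 * X ^ m + X ^ m + 1) * (s + t) + s * t) := by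
    ring
  rw [e]
  repeat' with_reducible first
    | assumption
    | exact CoeffNonneg.X_pow _
    | exact coeffNonneg_X
    | exact CoeffNonneg.one
    | exact CoeffNonneg.two
    | exact CoeffNonneg.seven
    | refine CoeffNonneg.add ?_ ?_
    | refine CoeffNonneg.mul ?_ ?_

/-- The mirror image of `coeffNonneg_gen_mul_gen`. -/
lemma coeffNonneg_gen_reverse_mul_gen_reverse {k n : ℕ} (g : ℕ → ℕ → ℤ) {i j : ℕ}
    (hn : 4 * k + 22 ≤ n) (hi : 1 ≤ i) (hik : i ≤ k) (hj : 1 ≤ j) (hjk : j ≤ k) :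
    CoeffNonneg (gen (word k n g i).reverse * gen (word k n g j).reverse + 2 * X ^ (n - 1)) := by
  obtain ⟨s, hs, hs'⟩ :=
    exists_sum_pairStarts (k := k) g i (by omega : 12 ≤ n) (fun q => n - 2 - q)
  obtain ⟨t, ht, ht'⟩ :=
    exists_sum_pairStarts (k := k) g j (by omega : 12 ≤ n) (fun q => n - 2 - q)
  obtain ⟨m, rfl⟩ : ∃ m, n = m + 11 := ⟨n - 11, by omega⟩
  rw [gen_word_reverse g hn hi hik, gen_word_reverse g hn hj hjk, hs', ht']
  rw [show m + 11 - 1 = m + 10 by omega, show m + 11 - 5 = m + 6 by omega, show m + 11 - 6 = m + 5 by omega,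
    show m + 11 - 7 = m + 4 by omega, show m + 11 - 2 - 2 = m + 7 by omega,
    show m + 11 - 2 - 7 = m + 2 by omega, show m + 11 - 2 - 9 = m by omega,
    show m + 11 - 2 - (m + 11 - 2) = 0 by omega]
  exact coeffNonneg_expansion_reverse_mul_expansion_reverse hs ht m

lemma coeff_nonneg_of_add_two_mul_X_pow {p : ℤ[X]} {n i : ℕ}
    (h : CoeffNonneg (p + 2 * X ^ n)) (hi : i ≠ n) : 0 ≤ p.coeff i := by
  have := h i
  rw [coeff_add, two_mul, coeff_add, coeff_X_pow, if_neg hi] at this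
  simpa using this

lemma aligned_word {k n : ℕ} (g : ℕ → ℕ → ℤ) {i j : ℕ}
    (hn : 4 * k + 22 ≤ n) (hi : 1 ≤ i) (hik : i ≤ k) (hj : 1 ≤ j) (hjk : j ≤ k) :
    aligned (word k n g i) (word k n g j) := by
  have hl := length_word k n g
  constructor
  · rw [force_eq_coeff _ _ (by rw [hl, hl]) (n - 1) (by rw [hl]; omega), neg_nonpos]
    exact coeffNonneg_gen_mul_gen_reverse g hn hi hik hj hjk _
  · intro A hA a ha1 ha2
    obtain ⟨a, rfl⟩ : ∃ b, a = b + 1 := ⟨a - 1, by omega⟩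
    rw [hl] at ha2
    have hlA : A.length = n := by
      rcases List.mem_pair.1 hA with rfl | rfl <;> simp [hl]
    rw [force_comm (sufx _ _), force_take_sufx _ _ (by rw [hl, hlA]) _ (by rw [hl]; omega),
      force_take_sufx _ _ (by rw [hl, hlA]) _ (by rw [hlA]; omega), neg_nonpos, neg_nonpos]
    rcases List.mem_pair.1 hA with rfl | rfl
    · exact ⟨coeffNonneg_gen_mul_gen_reverse g hn hi hik hj hjk _,
        coeffNonneg_gen_mul_gen_reverse g hn hj hjk hi hik _⟩
    · rw [List.reverse_reverse]
      exact ⟨coeff_nonneg_of_add_two_mul_X_pow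
          (coeffNonneg_gen_mul_gen g hn hi hik hj hjk) (by omega),
        coeff_nonneg_of_add_two_mul_X_pow
          (coeffNonneg_gen_reverse_mul_gen_reverse g hn hj hjk hi hik) (by omega)⟩

lemma force_word_reverse {k n : ℕ} (g : ℕ → ℕ → ℤ) (i j : ℕ) :
    force (word k n g i) (word k n g j).reverse =
      -∑ p ∈ Finset.range n,
        charge (letter k n g i p) * charge (letter k n g j (n - 1 - p)) := by
  rw [force_eq_sum _ _ (by simp [length_word]), length_word]
  congr 1
  refine Finset.sum_congr rfl fun p hp => ?_
  rw [Finset.mem_range] at hp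
  rw [word_getD g i hp, word_reverse_getD g j hp]

/-- The letter at `p` is the positive charge `0`. -/
lemma letter_eq_zero_iff {k n : ℕ} (g : ℕ → ℕ → ℤ) {i p : ℕ} :
    letter k n g i p = zero ↔ p ≠ 5 ∧ (p = 4 ∨ p = 6 ∨ p = n - 6 ∨
      p ∈ pairStarts k n g i ∨ (1 ≤ p ∧ p - 1 ∈ pairStarts k n g i)) := by
  unfold letter
  split_ifs <;> simp_all

lemma letter_eq_one_iff {k n : ℕ} (g : ℕ → ℕ → ℤ) {i p : ℕ} :
    letter k n g i p = one ↔ p = 5 := by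
  unfold letter
  split_ifs <;> simp_all

/-- If both glues are attractive, no two letters `0` face each other. -/
lemma not_zero_zero {k n : ℕ} (g : ℕ → ℕ → ℤ) {i j : ℕ} (hn : 4 * k + 22 ≤ n)
    (hi : 1 ≤ i) (hik : i ≤ k) (hj : 1 ≤ j) (hjk : j ≤ k) (hij : 0 < g i j)
    (hji : 0 < g j i) {p : ℕ} (hp : p < n) (h : letter k n g i p = zero)
    (h' : letter k n g j (n - 1 - p) = zero) : False := by
  rw [letter_eq_zero_iff] at h h'
  have key : ∀ a, ∀ b, a ∈ pairStarts k n g i → b ∈ pairStarts k n g j →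
      a + b + 2 ≠ n - 1 ∧ a + b + 1 ≠ n - 1 ∧ a + b ≠ n - 1 := by
    intro a b ha hb
    rw [mem_pairStarts] at ha hb
    rcases ha with h | h | h | h | h | ⟨l, h1, h2, h3, h⟩ <;>
    rcases hb with h' | h' | h' | h' | h' | ⟨l', h1', h2', h3', h'⟩ <;>
    try omega
    · have : i ≠ l' := by rintro rfl; omega
      omega
    · have : j ≠ l := by rintro rfl; omega
      omega
  have facing : ∀ {i a}, i ≤ k → a ∈ pairStarts k n g i →
      a ≠ n - 5 ∧ a ≠ n - 6 ∧ a ≠ n - 7 ∧ a ≠ n - 8 := by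
    intro i a hik ha
    rw [mem_pairStarts] at ha
    rcases ha with h | h | h | h | h | ⟨l, h1, h2, h3, h⟩ <;> omega
  obtain ⟨hp5, h⟩ := h
  obtain ⟨hp5', h'⟩ := h'
  rcases h with h | h | h | h | ⟨h0, h⟩ <;> rcases h' with h' | h' | h' | h' | ⟨h0', h'⟩ <;>
    first
    | omega
    | have := facing hjk h'
      omega
    | have := facing hik h
      omega
    | have := key _ _ h h'
      omega

lemma force_word_reverse_pos {k n : ℕ} (g : ℕ → ℕ → ℤ) {i j : ℕ} (hn : 4 * k + 22 ≤ n)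
    (hi : 1 ≤ i) (hik : i ≤ k) (hj : 1 ≤ j) (hjk : j ≤ k) (hij : 0 < g i j)
    (hji : 0 < g j i) : 0 < force (word k n g i) (word k n g j).reverse := by
  rw [force_word_reverse, neg_pos]
  refine Finset.sum_neg' (fun p hp => ?_) ⟨5, Finset.mem_range.2 (by omega), ?_⟩
  · rw [Finset.mem_range] at hp
    cases h : letter k n g i p <;> cases h' : letter k n g j (n - 1 - p) <;>
      simp only [charge] <;> try norm_num
    · exact not_zero_zero g hn hi hik hj hjk hij hji hp h h'
    · rw [letter_eq_one_iff] at h h'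
      omega
  · rw [(letter_eq_one_iff g).2 rfl, (letter_eq_zero_iff g).2 ⟨by omega, by omega⟩]
    simp [charge]

lemma force_word_reverse_nonpos {k n : ℕ} (g : ℕ → ℕ → ℤ) {i j : ℕ} (hn : 4 * k + 22 ≤ n)
    (hi : 1 ≤ i) (hik : i ≤ k) (hji : g j i ≤ 0) :
    force (word k n g i) (word k n g j).reverse ≤ 0 := by
  rw [force_word_reverse, neg_nonpos]
  have hmem : 9 + 2 * i ∈ pairStarts k n g i := by simp [mem_pairStarts]
  have hmem' : n - 11 - 2 * i ∈ pairStarts k n g j :=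
    mem_pairStarts.2 (by
      right; right; right; right; right
      exact ⟨i, hi, hik, hji, rfl⟩)
  have z1 : letter k n g i (9 + 2 * i) = zero :=
    (letter_eq_zero_iff g).2 ⟨by omega, by tauto⟩
  have z2 : letter k n g i (10 + 2 * i) = zero :=
    (letter_eq_zero_iff g).2 ⟨by omega, by
      rw [show 10 + 2 * i - 1 = 9 + 2 * i by omega]
      right; right; right; right
      exact ⟨by omega, hmem⟩⟩
  have z3 : letter k n g j (n - 1 - (10 + 2 * i)) = zero :=
    (letter_eq_zero_iff g).2 ⟨by omega, by
      rw [show n - 1 - (10 + 2 * i) = n - 11 - 2 * i by omega]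
      tauto⟩
  have z4 : letter k n g j (n - 1 - (9 + 2 * i)) = zero :=
    (letter_eq_zero_iff g).2 ⟨by omega, by
      rw [show n - 1 - (9 + 2 * i) - 1 = n - 11 - 2 * i by omega]
      right; right; right; right
      exact ⟨by omega, hmem'⟩⟩
  calc (0 : ℤ) = ∑ p ∈ Finset.range n, ((if p = 9 + 2 * i then 1 else 0)
        + (if p = 10 + 2 * i then 1 else 0) - (if p = 5 then 1 else 0)
        - (if p = n - 6 then 1 else 0)) := by
        simp only [Finset.sum_add_distrib, Finset.sum_sub_distrib, Finset.sum_ite_eq',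
          Finset.mem_range]
        rw [if_pos (by omega), if_pos (by omega), if_pos (by omega), if_pos (by omega)]
        norm_num
    _ ≤ _ := by
        refine Finset.sum_le_sum fun p hp => ?_
        rw [Finset.mem_range] at hp
        by_cases h1 : p = 9 + 2 * i
        · subst h1
          rw [z1, z4, if_pos rfl, if_neg (by omega), if_neg (by omega), if_neg (by omega)]
          simp [charge]
        by_cases h2 : p = 10 + 2 * i
        · subst h2
          rw [z2, z3, if_pos rfl, if_neg (by omega), if_neg (by omega), if_neg (by omega)]
          simp [charge]
        rw [if_neg h1, if_neg h2]
        cases h : letter k n g i p <;> cases h' : letter k n g j (n - 1 - p) <;>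
          simp only [charge] <;> try (split_ifs <;> norm_num <;> done)
        · have : p = n - 6 := by
            rw [letter_eq_one_iff] at h'
            omega
          rw [if_pos this]
          split_ifs <;> norm_num
        · rw [letter_eq_one_iff] at h
          rw [if_pos h]
          split_ifs <;> norm_num

/-- For every `k`-glue function `g`, there is a set of `k` dipole words, each of length
`9k+42`, that attractively encodes `g`. -/
theorem stmt3 (k : ℕ) (hk : 0 < k) (g : ℕ → ℕ → ℤ)
    (hsym : ∀ i ∈ Finset.Icc 1 k, ∀ j ∈ Finset.Icc 1 k, g i j = g j i) :
    ∃ W : ℕ → List Dip,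
      (∀ i ∈ Finset.Icc 1 k, (W i).length = 9 * k + 42) ∧
      attEncodes k W g := by
  have hn : 4 * k + 22 ≤ 9 * k + 42 := by omega
  refine ⟨word k (9 * k + 42) g, fun i _ => length_word _ _ _ _, fun i hi j hj => ?_,
    fun i hi j hj => ?_⟩
  · rw [Finset.mem_Icc] at hi hj
    exact aligned_word g hn hi.1 hi.2 hj.1 hj.2
  · have hs := hsym i hi j hj
    rw [Finset.mem_Icc] at hi hj
    refine ⟨fun h => ?_, fun h =>
      force_word_reverse_pos g hn hi.1 hi.2 hj.1 hj.2 h (hs ▸ h)⟩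
    by_contra hg
    exact absurd h (not_lt.2 (force_word_reverse_nonpos g hn hi.1 hi.2 (by omega)))
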